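/- Let T₁,...,T_N be i.i.d. shifted exponential with rate λ_s, shift c, T_n one of them, T_N(K) the K-th order statistic, T_D > c a fixed deadline. Then P(T_n < t, T_n ≤ T_D, T_n ≤ T_N(K)) for c < t ≤ T_D equals (1/N)·Σ_{h=1}^K [1 - Z_h - Σ_{j=0}^{h-1} B_{h,j}·(e^{-λ_s(t-c)U_{h,j}} - e^{-λ_s U_{h,j}(T_D-c)})/U_{h,j}], where B_{h,j} = h·binom(N,h)·binom(h-1,j)·(-1)^j, U_{h,j} = N-h+1+j, and Z_h = Σ_{i=0}^{h-1} B_{h,i}·e^{-λ_s U_{h,i}(T_D-c)}/U_{h,i}. -/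

import Mathlib

open MeasureTheory ProbabilityTheory Real

/-- The shifted exponential distribution with rate `l` and shift `c`:
density `l * exp (-l*(t-c))` for `t > c`, `0` otherwise. -/
noncomputable def shiftedExp (l c : ℝ) : MeasureTheory.Measure ℝ :=
  MeasureTheory.volume.withDensity
    (fun t => ENNReal.ofReal (if c < t then l * Real.exp (-l * (t - c)) else 0))

/-- The `K`-th order statistic (K-th smallest value) of the family `T` evaluated at `ω`. -/
noncomputable def orderStat {Ω : Type*} {N : ℕ} (T : Fin N → Ω → ℝ) (K : ℕ) (ω : Ω) : ℝ :=
  sInf {x : ℝ | K ≤ Nat.card {i : Fin N // T i ω ≤ x}}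

theorem orderStat_set_nonempty {N K : ℕ} (hKN : K ≤ N) (v : Fin N → ℝ) :
    {x : ℝ | K ≤ Nat.card {i : Fin N // v i ≤ x}}.Nonempty := by
  obtain ⟨M, hM⟩ := (Set.finite_range v).bddAbove
  refine ⟨M, ?_⟩
  have : ∀ i, v i ≤ M := fun i => hM ⟨i, rfl⟩
  simpa [this] using hKN

/-- A real is at most the `K`-th order statistic iff fewer than `K` of the values lie strictly
below it. -/
theorem le_orderStat_iff {Ω : Type*} {N K : ℕ} (hK : 1 ≤ K) (hKN : K ≤ N) (T : Fin N → Ω → ℝ)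
    (ω : Ω) (y : ℝ) :
    y ≤ orderStat T K ω ↔ (Finset.univ.filter fun i => T i ω < y).card < K := by
  have hbdd : BddBelow {x : ℝ | K ≤ Nat.card {i : Fin N // T i ω ≤ x}} := by
    obtain ⟨M, hM⟩ := (Set.finite_range fun i => T i ω).bddBelow
    refine ⟨M, fun x hx => ?_⟩
    have : Nonempty {i : Fin N // T i ω ≤ x} := by
      by_contra hne
      rw [not_nonempty_iff] at hne
      simp at hx
      omega
    obtain ⟨i, hi⟩ := this
    exact (hM ⟨i, rfl⟩).trans hi
  rw [orderStat, le_csInf_iff hbdd (orderStat_set_nonempty hKN fun i => T i ω)]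
  constructor
  · intro h
    by_contra! hcard
    set S := Finset.univ.filter fun i => T i ω < y with hS
    have hSne : S.Nonempty := Finset.card_pos.mp (by omega)
    have hmem : K ≤ Nat.card {i : Fin N // T i ω ≤ S.sup' hSne fun i => T i ω} := by
      rw [Nat.card_eq_fintype_card, Fintype.card_subtype]
      refine hcard.trans (Finset.card_le_card fun i hi => ?_)
      exact Finset.mem_filter.mpr ⟨Finset.mem_univ i, Finset.le_sup' (fun i => T i ω) hi⟩
    have hlt : (S.sup' hSne fun i => T i ω) < y := by
      rw [Finset.sup'_lt_iff]
      intro i hi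
      simpa [hS] using hi
    exact absurd (h _ hmem) (not_le.mpr hlt)
  · intro h x hx
    by_contra! hxy
    simp only [Set.mem_ofPred_eq, Nat.card_eq_fintype_card, Fintype.card_subtype] at hx
    refine absurd (hx.trans (Finset.card_le_card fun i hi => ?_)) (not_le.mpr h)
    simp only [Finset.mem_filter, Finset.mem_univ, true_and] at hi ⊢
    exact hi.trans_lt hxy

theorem measurable_shiftedExp_density (l c : ℝ) :
    Measurable fun t : ℝ => ENNReal.ofReal (if c < t then l * Real.exp (-l * (t - c)) else 0) :=
  (Measurable.ite measurableSet_Ioi (by fun_prop) measurable_const).ennreal_ofReal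

theorem shiftedExp_Ici {l c x : ℝ} (hl : 0 < l) (hx : c ≤ x) :
    shiftedExp l c (Set.Ici x) = ENNReal.ofReal (Real.exp (-l * (x - c))) := by
  have hexp : ∀ t : ℝ, l * Real.exp (-l * (t - c)) = l * Real.exp (l * c) * Real.exp (-l * t) := by
    intro t
    rw [mul_assoc, ← Real.exp_add]
    ring_nf
  have hint : IntegrableOn (fun t : ℝ => l * Real.exp (-l * (t - c))) (Set.Ioi x) := by
    simp_rw [hexp]
    exact (integrableOn_exp_mul_Ioi (neg_lt_zero.mpr hl) x).const_mul _
  have hval : ∫ t in Set.Ioi x, l * Real.exp (-l * (t - c)) = Real.exp (-l * (x - c)) := by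
    simp_rw [hexp]
    rw [integral_const_mul, integral_exp_mul_Ioi (neg_lt_zero.mpr hl), neg_div_neg_eq]
    have := hexp x
    field_simp at this ⊢
    linarith
  rw [shiftedExp, withDensity_apply _ measurableSet_Ici, setLIntegral_congr Ioi_ae_eq_Ici.symm,
    ← hval, ofReal_integral_eq_lintegral_ofReal hint (ae_of_all _ fun t => by positivity)]
  refine setLIntegral_congr_fun measurableSet_Ioi fun t ht => ?_
  simp [hx.trans_lt ht]

theorem shiftedExp_Iic (l c : ℝ) : shiftedExp l c (Set.Iic c) = 0 := by
  rw [shiftedExp, withDensity_apply _ measurableSet_Iic]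
  refine setLIntegral_eq_zero measurableSet_Iic fun t ht => ?_
  simp [not_lt.mpr (Set.mem_Iic.mp ht)]

theorem isProbabilityMeasure_shiftedExp {l : ℝ} (hl : 0 < l) (c : ℝ) :
    IsProbabilityMeasure (shiftedExp l c) := by
  constructor
  have h0 : shiftedExp l c (Set.Iio c) = 0 :=
    measure_mono_null Set.Iio_subset_Iic_self (shiftedExp_Iic l c)
  rw [← Set.Iio_union_Ici (a := c), measure_union (by simp [Set.disjoint_left]) measurableSet_Ici,
    h0, shiftedExp_Ici hl le_rfl]
  simp

theorem shiftedExp_Iio {l c x : ℝ} (hl : 0 < l) (hx : c ≤ x) :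
    shiftedExp l c (Set.Iio x) = ENNReal.ofReal (1 - Real.exp (-l * (x - c))) := by
  have := isProbabilityMeasure_shiftedExp hl c
  rw [← Set.compl_Ici, prob_compl_eq_one_sub measurableSet_Ici, shiftedExp_Ici hl hx,
    ENNReal.ofReal_sub _ (Real.exp_pos _).le, ENNReal.ofReal_one]

theorem measurableSet_card_lt_lt (m K : ℕ) :
    MeasurableSet {p : ℝ × (Fin m → ℝ) | (Finset.univ.filter fun j => p.2 j < p.1).card < K} := by
  have : Measurable fun p : ℝ × (Fin m → ℝ) => (Finset.univ.filter fun j => p.2 j < p.1).card := by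
    simp_rw [Finset.card_filter]
    refine Finset.measurable_sum _ fun j _ => Measurable.ite ?_ measurable_const measurable_const
    exact measurableSet_lt (by fun_prop) (by fun_prop)
  exact this measurableSet_Iio

/-- The number of coordinates below `x` of an i.i.d. vector is binomially distributed. -/
theorem pi_card_lt_eq (m k : ℕ) (μ : MeasureTheory.Measure ℝ) [IsProbabilityMeasure μ] (x : ℝ) :
    MeasureTheory.Measure.pi (fun _ : Fin m => μ)
        {w | (Finset.univ.filter fun j => w j < x).card = k}
      = (m.choose k : ENNReal) * (μ (Set.Iio x) ^ k * μ (Set.Ici x) ^ (m - k)) := by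
  let box : Finset (Fin m) → Set (Fin m → ℝ) := fun S =>
    Set.pi Set.univ fun j => if j ∈ S then Set.Iio x else Set.Ici x
  have hbox : ∀ S w, w ∈ box S ↔ (Finset.univ.filter fun j => w j < x) = S := by
    intro S w
    simp only [box, Set.mem_univ_pi, Finset.ext_iff, Finset.mem_filter, Finset.mem_univ, true_and]
    refine forall_congr' fun j => ?_
    by_cases hj : j ∈ S <;> simp [hj]
  have hunion : {w : Fin m → ℝ | (Finset.univ.filter fun j => w j < x).card = k}
      = ⋃ S ∈ Finset.powersetCard k Finset.univ, box S := by
    ext w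
    simp [hbox, Finset.mem_powersetCard]
  have hmeas : ∀ S, MeasureTheory.Measure.pi (fun _ : Fin m => μ) (box S)
      = μ (Set.Iio x) ^ S.card * μ (Set.Ici x) ^ (m - S.card) := by
    intro S
    simp only [box, Measure.pi_pi, apply_ite μ]
    rw [Finset.prod_ite]
    simp [Finset.filter_not, Finset.card_sdiff]
  rw [hunion, measure_biUnion_finset]
  · rw [Finset.sum_congr rfl fun S hS => by rw [hmeas, (Finset.mem_powersetCard.mp hS).2]]
    simp
  · intro S _ S' _ hne
    refine Set.disjoint_left.mpr fun w hw hw' => hne ?_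
    rw [← (hbox S w).mp hw, ← (hbox S' w).mp hw']
  · intro S _
    refine MeasurableSet.univ_pi fun j => ?_
    split_ifs
    exacts [measurableSet_Iio, measurableSet_Ici]

theorem pi_card_lt_lt (m K : ℕ) (μ : MeasureTheory.Measure ℝ) [IsProbabilityMeasure μ] (x : ℝ) :
    MeasureTheory.Measure.pi (fun _ : Fin m => μ)
        {w | (Finset.univ.filter fun j => w j < x).card < K}
      = ∑ k ∈ Finset.range K,
          (m.choose k : ENNReal) * (μ (Set.Iio x) ^ k * μ (Set.Ici x) ^ (m - k)) := by
  have hmeas : Measurable fun w : Fin m → ℝ => (Finset.univ.filter fun j => w j < x).card := by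
    simp_rw [Finset.card_filter]
    refine Finset.measurable_sum _ fun j _ => Measurable.ite ?_ measurable_const measurable_const
    exact measurableSet_lt (by fun_prop) (by fun_prop)
  have hunion : {w : Fin m → ℝ | (Finset.univ.filter fun j => w j < x).card < K}
      = ⋃ k ∈ Finset.range K, {w | (Finset.univ.filter fun j => w j < x).card = k} := by
    ext w
    simp
  rw [hunion, measure_biUnion_finset]
  · exact Finset.sum_congr rfl fun k _ => pi_card_lt_eq m k μ x
  · intro k _ k' _ hne
    exact Set.disjoint_left.mpr fun w hw hw' => hne (hw.symm.trans hw')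
  · exact fun k _ => hmeas (measurableSet_singleton k)

theorem sum_neg_one_pow_mul_choose_div (m : ℕ) : ∀ b : ℕ,
    ∑ j ∈ Finset.range (m + 1), (m.choose j : ℝ) * ((-1) ^ j / ((b : ℝ) + 1 + j))
      = (m.factorial : ℝ) * b.factorial / (m + b + 1).factorial := by
  induction m with
  | zero =>
    intro b
    simp [Nat.factorial_succ]
    field_simp
  | succ m ih =>
    intro b
    have hrec := Finset.sum_choose_succ_mul
      (fun j _ => (-1 : ℝ) ^ j / ((b : ℝ) + 1 + j)) m
    have hshift : ∑ j ∈ Finset.range (m + 1),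
        (m.choose j : ℝ) * ((-1) ^ (j + 1) / ((b : ℝ) + 1 + (j + 1 : ℕ)))
        = -∑ j ∈ Finset.range (m + 1),
          (m.choose j : ℝ) * ((-1) ^ j / (((b + 1 : ℕ) : ℝ) + 1 + j)) := by
      rw [← Finset.sum_neg_distrib]
      refine Finset.sum_congr rfl fun j _ => ?_
      push_cast
      rw [show (b : ℝ) + 1 + (j + 1) = b + 1 + 1 + j by ring]
      ring
    rw [hrec, hshift, ih b, ih (b + 1), show m + 1 + b + 1 = (m + b + 1) + 1 by ring,
      show m + (b + 1) + 1 = (m + b + 1) + 1 by ring, Nat.factorial_succ (m + b + 1),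
      Nat.factorial_succ m, Nat.factorial_succ b]
    push_cast
    field_simp
    ring

theorem integral_binomial_exp {m k : ℕ} (hk : k ≤ m) {l : ℝ} (hl : l ≠ 0) (c t : ℝ) :
    ∫ x in c..t, l * Real.exp (-l * (x - c)) * ((m.choose k : ℝ) *
        ((1 - Real.exp (-l * (x - c))) ^ k * Real.exp (-l * (x - c)) ^ (m - k)))
      = 1 / ((m : ℝ) + 1) * (1 - ∑ j ∈ Finset.range (k + 1),
          ((k : ℝ) + 1) * ((m + 1).choose (k + 1) : ℝ) * (k.choose j : ℝ) * (-1) ^ j *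
            Real.exp (-l * (t - c) * ((m : ℝ) - k + 1 + j)) / ((m : ℝ) - k + 1 + j)) := by
  obtain ⟨b, rfl⟩ := Nat.exists_eq_add_of_le hk
  have hU : ((k + b : ℕ) : ℝ) - k = b := by push_cast; ring
  rw [hU]
  let A : ℝ := ((k + b).choose k : ℝ)
  have hA : A = ((k + b : ℕ) + 1 : ℝ)⁻¹ * (((k : ℝ) + 1) * ((k + b + 1).choose (k + 1) : ℝ)) := by
    have h := Nat.add_one_mul_choose_eq (k + b) k
    have h' : ((k + b : ℕ) + 1 : ℝ) * A = ((k + b + 1).choose (k + 1) : ℝ) * (k + 1) := by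
      simp only [A]
      exact_mod_cast h
    field_simp
    linarith
  let G : ℝ → ℝ := fun x => -∑ j ∈ Finset.range (k + 1),
    A * ((k.choose j : ℝ) * ((-1) ^ j / ((b : ℝ) + 1 + j))) * Real.exp (-l * (x - c) * (b + 1 + j))
  have hderiv : ∀ x, HasDerivAt G (l * Real.exp (-l * (x - c)) * (((k + b).choose k : ℝ) *
      ((1 - Real.exp (-l * (x - c))) ^ k * Real.exp (-l * (x - c)) ^ (k + b - k)))) x := by
    intro x
    have hterm : ∀ j ∈ Finset.range (k + 1), HasDerivAt
        (fun x => A * ((k.choose j : ℝ) * ((-1) ^ j / ((b : ℝ) + 1 + j))) *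
          Real.exp (-l * (x - c) * (b + 1 + j)))
        (-(l * A * ((-1) ^ j * (k.choose j : ℝ) * Real.exp (-l * (x - c)) ^ (b + 1 + j)))) x := by
      intro j _
      have h1 : HasDerivAt (fun x : ℝ => -l * (x - c) * (b + 1 + j)) (-l * (b + 1 + j)) x := by
        simpa using (((hasDerivAt_id x).sub_const c).const_mul (-l)).mul_const ((b : ℝ) + 1 + j)
      refine (h1.exp.const_mul (A * ((k.choose j : ℝ) * ((-1) ^ j / ((b : ℝ) + 1 + j))))).congr_deriv
        ?_
      have : Real.exp (-l * (x - c)) ^ (b + 1 + j) = Real.exp (-l * (x - c) * (b + 1 + j)) := by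
        rw [← Real.exp_nat_mul]
        push_cast
        ring_nf
      rw [this]
      have : (b : ℝ) + 1 + j ≠ 0 := by positivity
      field_simp
    refine (HasDerivAt.fun_sum hterm).fun_neg.congr_deriv ?_
    set E := Real.exp (-l * (x - c))
    rw [Finset.sum_neg_distrib, neg_neg, ← Finset.mul_sum, sub_eq_neg_add, add_pow,
      Nat.add_sub_cancel_left, Finset.sum_mul, Finset.mul_sum, Finset.mul_sum, Finset.mul_sum]
    refine Finset.sum_congr rfl fun j _ => ?_
    rw [neg_pow E j]
    ring
  rw [intervalIntegral.integral_eq_sub_of_hasDerivAt (fun x _ => hderiv x)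
    (Continuous.intervalIntegrable (by fun_prop) _ _)]
  have hGc : G c = -(1 / ((k + b : ℕ) + 1 : ℝ)) := by
    simp only [G, sub_self, mul_zero, zero_mul, Real.exp_zero, mul_one]
    rw [← Finset.mul_sum, sum_neg_one_pow_mul_choose_div]
    simp only [A]
    rw [Nat.cast_add_choose, Nat.factorial_succ (k + b)]
    push_cast
    field_simp
  rw [hGc]
  simp only [G]
  rw [mul_sub (1 / _), Finset.mul_sum, mul_one, sub_neg_eq_add, neg_add_eq_sub]
  congr 1
  refine Finset.sum_congr rfl fun j _ => ?_
  rw [hA]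
  push_cast
  ring

/-- The probability that a fixed coordinate of an i.i.d. shifted exponential vector is below `t`
and is preceded by fewer than `K` of the other coordinates. -/
theorem setLIntegral_pi_card_lt (m K : ℕ) {l : ℝ} (hl : 0 < l) {c t : ℝ} (ht : c < t) :
    ∫⁻ x in Set.Iio t, MeasureTheory.Measure.pi (fun _ : Fin m => shiftedExp l c)
        {w | (Finset.univ.filter fun j => w j < x).card < K} ∂(shiftedExp l c)
      = ENNReal.ofReal (∑ k ∈ Finset.range K, ∫ x in c..t, l * Real.exp (-l * (x - c)) *
          ((m.choose k : ℝ) *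
            ((1 - Real.exp (-l * (x - c))) ^ k * Real.exp (-l * (x - c)) ^ (m - k)))) := by
  have := isProbabilityMeasure_shiftedExp hl c
  have hcont : ∀ k, Continuous fun x => l * Real.exp (-l * (x - c)) * ((m.choose k : ℝ) *
      ((1 - Real.exp (-l * (x - c))) ^ k * Real.exp (-l * (x - c)) ^ (m - k))) := by
    intro k
    fun_prop
  have hE : ∀ x ∈ Set.Ioo c t, 0 ≤ 1 - Real.exp (-l * (x - c)) := by
    intro x hx
    rw [sub_nonneg, Real.exp_le_one_iff]
    nlinarith [hx.1]
  have hae : (Set.Iio t : Set ℝ) =ᵐ[shiftedExp l c] Set.Ioo c t := by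
    refine ae_eq_set.mpr ⟨measure_mono_null (fun x hx => ?_) (shiftedExp_Iic l c), ?_⟩
    · simp only [Set.mem_sdiff, Set.mem_Iio, Set.mem_Ioo, not_and] at hx
      by_contra h
      exact hx.2 (not_le.mp h) hx.1
    · rw [Set.sdiff_eq_empty.mpr Set.Ioo_subset_Iio_self, measure_empty]
  have hmeas : Measurable fun x => MeasureTheory.Measure.pi (fun _ : Fin m => shiftedExp l c)
      {w | (Finset.univ.filter fun j => w j < x).card < K} :=
    measurable_measure_prodMk_left (measurableSet_card_lt_lt m K)
  rw [← intervalIntegral.integral_finsetSum fun k _ => (hcont k).intervalIntegrable _ _,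
    intervalIntegral.integral_of_le ht.le, integral_Ioc_eq_integral_Ioo,
    ofReal_integral_eq_lintegral_ofReal, setLIntegral_congr hae]
  · refine (setLIntegral_withDensity_eq_setLIntegral_mul _ (measurable_shiftedExp_density l c) hmeas
      measurableSet_Ioo).trans ?_
    refine setLIntegral_congr_fun measurableSet_Ioo fun x hx => ?_
    have h1 := hE x hx
    simp only [Pi.mul_apply, if_pos hx.1]
    rw [pi_card_lt_lt, ← Finset.mul_sum,
      ENNReal.ofReal_mul (p := l * Real.exp (-l * (x - c))) (by positivity),
      ENNReal.ofReal_sum_of_nonneg fun k _ => by positivity]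
    congr 1
    refine Finset.sum_congr rfl fun k _ => ?_
    rw [shiftedExp_Iio hl hx.1.le, shiftedExp_Ici hl hx.1.le, ENNReal.ofReal_mul (by positivity),
      ENNReal.ofReal_mul (by positivity), ENNReal.ofReal_pow h1,
      ENNReal.ofReal_pow (Real.exp_pos _).le, ENNReal.ofReal_natCast]
  · exact ((continuous_finsetSum _ fun k _ => hcont k).integrableOn_Icc).mono_set
      Set.Ioo_subset_Icc_self
  · refine (ae_restrict_iff' measurableSet_Ioo).mpr (ae_of_all _ fun x hx => ?_)
    have h1 := hE x hx
    exact Finset.sum_nonneg fun k _ => by positivity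

theorem pi_lt_and_card_lt (m K : ℕ) (μ : MeasureTheory.Measure ℝ) [IsProbabilityMeasure μ]
    (n : Fin (m + 1)) (t : ℝ) :
    MeasureTheory.Measure.pi (fun _ : Fin (m + 1) => μ)
        {v | v n < t ∧ (Finset.univ.filter fun i => v i < v n).card < K}
      = ∫⁻ x in Set.Iio t, MeasureTheory.Measure.pi (fun _ : Fin m => μ)
          {w | (Finset.univ.filter fun j => w j < x).card < K} ∂μ := by
  have hmp := measurePreserving_piFinSuccAbove (fun _ : Fin (m + 1) => μ) n
  let S : Set (ℝ × (Fin m → ℝ)) :=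
    {p | p.1 < t} ∩ {p | (Finset.univ.filter fun j => p.2 j < p.1).card < K}
  have hS : MeasurableSet S :=
    (measurableSet_lt measurable_fst measurable_const).inter (measurableSet_card_lt_lt m K)
  have hpre : {v : Fin (m + 1) → ℝ | v n < t ∧ (Finset.univ.filter fun i => v i < v n).card < K}
      = MeasurableEquiv.piFinSuccAbove (fun _ => ℝ) n ⁻¹' S := by
    ext v
    have : (Finset.univ.filter fun i => v i < v n).card
        = (Finset.univ.filter fun j => v (n.succAbove j) < v n).card := by
      simp_rw [Finset.card_filter]
      rw [Fin.sum_univ_succAbove _ n]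
      simp
    simp [S, this, Fin.removeNth]
  rw [hpre, hmp.measure_preimage hS.nullMeasurableSet, Measure.prod_apply hS,
    ← lintegral_indicator measurableSet_Iio]
  refine lintegral_congr fun x => ?_
  by_cases hx : x < t
  · simp [S, hx]
  · simp [S, hx]

theorem prob_success_before_t
    {Ω : Type*} [MeasurableSpace Ω] (P : MeasureTheory.Measure Ω) [IsProbabilityMeasure P]
    (N K : ℕ) (hK : 1 ≤ K) (hKN : K ≤ N)
    (l c TD t : ℝ) (hl : 0 < l) (hc : 0 ≤ c) (ht : c < t) (htTD : t ≤ TD)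
    (T : Fin N → Ω → ℝ) (hT : ∀ i, Measurable (T i)) (n : Fin N)
    (hlaw : MeasureTheory.Measure.map (fun ω i => T i ω) P
      = MeasureTheory.Measure.pi (fun _ : Fin N => shiftedExp l c))
    (B : ℕ → ℕ → ℝ)
    (hB : ∀ h j, B h j = (h : ℝ) * (N.choose h : ℝ) * ((h - 1).choose j : ℝ) * (-1) ^ j)
    (U : ℕ → ℕ → ℝ) (hU : ∀ h j, U h j = (N : ℝ) - h + 1 + j)
    (Z : ℕ → ℝ)
    (hZ : ∀ h, Z h = ∑ i ∈ Finset.range h, B h i * Real.exp (-l * U h i * (TD - c)) / U h i) :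
    (P {ω | T n ω < t ∧ T n ω ≤ TD ∧ T n ω ≤ orderStat T K ω}).toReal
      = (1 / (N : ℝ)) * ∑ h ∈ Finset.Icc 1 K,
          (1 - Z h - ∑ j ∈ Finset.range h,
            B h j * (Real.exp (-l * (t - c) * U h j) - Real.exp (-l * U h j * (TD - c))) / U h j) := by
  obtain ⟨m, rfl⟩ : ∃ m, N = m + 1 := ⟨N - 1, by omega⟩
  have := isProbabilityMeasure_shiftedExp hl c
  have hmeas : MeasurableSet
      {v : Fin (m + 1) → ℝ | v n < t ∧ (Finset.univ.filter fun i => v i < v n).card < K} := by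
    refine (measurableSet_lt (measurable_pi_apply n) measurable_const).inter ?_
    have : Measurable fun v : Fin (m + 1) → ℝ => (v n, v) := by fun_prop
    exact this (measurableSet_card_lt_lt (m + 1) K)
  have hevent : {ω | T n ω < t ∧ T n ω ≤ TD ∧ T n ω ≤ orderStat T K ω} = (fun ω i => T i ω) ⁻¹'
      {v : Fin (m + 1) → ℝ | v n < t ∧ (Finset.univ.filter fun i => v i < v n).card < K} := by
    ext ω
    simp only [Set.mem_ofPred_eq, Set.mem_preimage, le_orderStat_iff hK hKN]
    exact and_congr_right fun h => and_iff_right (h.le.trans htTD)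
  have hterm : ∀ h ∈ Finset.Icc 1 K, 1 - Z h - ∑ j ∈ Finset.range h,
      B h j * (Real.exp (-l * (t - c) * U h j) - Real.exp (-l * U h j * (TD - c))) / U h j
      = 1 - ∑ j ∈ Finset.range h, B h j * Real.exp (-l * (t - c) * U h j) / U h j := by
    intro h _
    rw [hZ, sub_sub, ← Finset.sum_add_distrib]
    congr 1
    exact Finset.sum_congr rfl fun j _ => by ring
  have hnonneg : 0 ≤ ∑ k ∈ Finset.range K, ∫ x in c..t, l * Real.exp (-l * (x - c)) *
      ((m.choose k : ℝ) *
        ((1 - Real.exp (-l * (x - c))) ^ k * Real.exp (-l * (x - c)) ^ (m - k))) := by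
    refine Finset.sum_nonneg fun k _ => intervalIntegral.integral_nonneg ht.le fun x hx => ?_
    have : 0 ≤ 1 - Real.exp (-l * (x - c)) := by
      rw [sub_nonneg, Real.exp_le_one_iff]
      nlinarith [hx.1]
    positivity
  rw [hevent, ← Measure.map_apply (measurable_pi_lambda _ hT) hmeas, hlaw, pi_lt_and_card_lt,
    setLIntegral_pi_card_lt m K hl ht, ENNReal.toReal_ofReal hnonneg, Finset.sum_congr rfl hterm,
    Finset.mul_sum, ← Finset.Ico_add_one_right_eq_Icc, Finset.sum_Ico_eq_sum_range,
    Nat.add_sub_cancel]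
  refine Finset.sum_congr rfl fun k hk => ?_
  have hkm : k ≤ m := by
    have := Finset.mem_range.mp hk
    omega
  rw [integral_binomial_exp hkm hl.ne', add_comm 1 k]
  have hUk : ∀ j, U (k + 1) j = (m : ℝ) - k + 1 + j := by
    intro j
    rw [hU]
    push_cast
    ring
  simp only [hB, hUk, Nat.add_sub_cancel, Nat.cast_add, Nat.cast_one]
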